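/- arXiv:1911.11850 — 2 statements merged into one kernel-verified Lean document; each statement's English description precedes it below -/
import Mathlib

section
/- Let ε : ℕ → ZMod 2 satisfy the Adem constraints and let s ≥ 1. If ε(r) = 0 for every natural number r that is not congruent to 1 modulo 2^s, and moreover ε(2^s + 1) = 0, then ε(r) = 0 for every natural number r that is not congruent to 1 modulo 2^{s+1}. -/
/-!
Put `q = 2 ^ s`. By hypothesis `ε` is supported on the numbers `1 + j * q`, and `ε (1 + q) = 0`;
the claim is that `ε (1 + j * q) = 0` for every odd `j`. For `j = 2 * k + 1` with `k ≥ 1`, take the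
Adem constraint with indices `1 + q` and `2 + (4 * k + 1) * q`. Its left side vanishes because
`ε (1 + q) = 0`. On the right, a term with index `i` needs `2 + (4 * k + 1) * q ≤ 2 * i`, which,
as `i ≡ 1` modulo `q`, gives `i ≥ 1 + j * q`. Since `ε 0 = 0`, the sum `E ε n d` vanishes for
`d < n` (`E_eq_zero`), which gives `i ≤ 1 + j * q`. So only `i = 1 + j * q` remains, where the
factor `E ε (i + 1) (i + 1)` equals `1` (`E_self`) and the binomial coefficient is
`C(2 * k * q - 1, q) ≡ C(2 * k - 1, 1) ≡ 1` by Lucas' theorem. What is left is `ε (1 + j * q) = 0`.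
-/

/-- `E ε s d` is the sum over all `s`-tuples of naturals summing to `d` of the
products of the values of `ε`, in `ZMod 2`. -/
def E (ε : ℕ → ZMod 2) (s d : ℕ) : ZMod 2 :=
  ∑ f ∈ Finset.Nat.antidiagonalTuple s d, ∏ j, ε (f j)

/-- `ε` satisfies the Adem constraints encoding the Adem relations among the
Dyer-Lashof operations on `F₂[u]` with `Q^{2r} u = ε r • u^{r+1}`. -/
def AdemConstraints (ε : ℕ → ZMod 2) : Prop :=
  ε 0 = 0 ∧ ε 1 = 1 ∧ ∀ s r : ℕ, r > 2 * s →
    ε s * E ε (s + 1) r =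
      ∑ i ∈ (Finset.Icc (s + 1) (r - s - 1)).filter (fun i => r ≤ 2 * i),
        ((Nat.choose (i - s - 1) (2 * i - r) : ZMod 2) * ε i * E ε (i + 1) (r + s - i))

/-- Every `n`-tuple with sum `d < n` has a zero entry. -/
lemma E_eq_zero (ε : ℕ → ZMod 2) (h0 : ε 0 = 0) (n d : ℕ) (h : d < n) : E ε n d = 0 := by
  refine Finset.sum_eq_zero fun f hf => ?_
  rw [Finset.Nat.mem_antidiagonalTuple] at hf
  obtain ⟨j, hj⟩ : ∃ j, f j = 0 := by
    by_contra! hne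
    have : ∑ _j : Fin n, 1 ≤ ∑ j, f j :=
      Finset.sum_le_sum fun j _ => Nat.one_le_iff_ne_zero.mpr (hne j)
    simp at this
    omega
  exact Finset.prod_eq_zero (Finset.mem_univ j) (by rw [hj, h0])

/-- An `n`-tuple with sum `n` other than `(1, …, 1)` has a zero entry. -/
lemma E_self (ε : ℕ → ZMod 2) (h0 : ε 0 = 0) (h1 : ε 1 = 1) (n : ℕ) : E ε n n = 1 := by
  unfold E
  rw [Finset.sum_eq_single (fun _ => 1)]
  · simp [h1]
  · intro f hf hne
    rw [Finset.Nat.mem_antidiagonalTuple] at hf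
    obtain ⟨j, hj⟩ : ∃ j, f j = 0 := by
      by_contra! hpos
      have hle : ∀ j ∈ Finset.univ, 1 ≤ f j := fun j _ => Nat.one_le_iff_ne_zero.mpr (hpos j)
      have heq : ∑ _j : Fin n, 1 = ∑ j, f j := by simp [hf]
      rw [Finset.sum_eq_sum_iff_of_le hle] at heq
      exact hne (funext fun j => (heq j (Finset.mem_univ j)).symm)
    exact Finset.prod_eq_zero (Finset.mem_univ j) (by rw [hj, h0])
  · intro hn
    simp [Finset.Nat.mem_antidiagonalTuple] at hn

/-- Lucas' theorem modulo `2`, when the last `s` binary digits of the upper index are all `1` and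
those of the lower index are all `0`. -/
lemma choose_pow_two_mul (s A B : ℕ) :
    ((Nat.choose (2 ^ s * (A + 1) - 1) (2 ^ s * B) : ℕ) : ZMod 2) = (Nat.choose A B : ℕ) := by
  induction s with
  | zero => simp
  | succ s ih =>
    rw [← ih, ZMod.natCast_eq_natCast_iff]
    have hpos : 0 < 2 ^ s * (A + 1) := by positivity
    have e1 : 2 ^ (s + 1) * (A + 1) - 1 = 2 * (2 ^ s * (A + 1) - 1) + 1 := by
      rw [pow_succ', mul_assoc]; omega
    have e2 : 2 ^ (s + 1) * B = 2 * (2 ^ s * B) := by rw [pow_succ', mul_assoc]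
    rw [e1, e2]
    generalize 2 ^ s * (A + 1) - 1 = N
    generalize 2 ^ s * B = M
    have := Choose.choose_modEq_choose_mod_mul_choose_div_nat (n := 2 * N + 1) (k := 2 * M) (p := 2)
    rwa [show (2 * N + 1) % 2 = 1 by omega, show (2 * M) % 2 = 0 by omega,
      show (2 * N + 1) / 2 = N by omega, show (2 * M) / 2 = M by omega, Nat.choose_zero_right,
      one_mul] at this

theorem stmt_4 (ε : ℕ → ZMod 2) (hε : AdemConstraints ε) (s : ℕ) (hs : 1 ≤ s)
    (h : ∀ r : ℕ, r % 2 ^ s ≠ 1 → ε r = 0) (h' : ε (2 ^ s + 1) = 0) :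
    ∀ r : ℕ, r % 2 ^ (s + 1) ≠ 1 → ε r = 0 := by
  obtain ⟨h0, h1, hA⟩ := hε
  intro r hr
  by_cases hrq : r % 2 ^ s ≠ 1
  · exact h r hrq
  rw [not_not] at hrq
  have hq : 2 ≤ 2 ^ s := by
    calc 2 = 2 ^ 1 := rfl
      _ ≤ 2 ^ s := Nat.pow_le_pow_right (by norm_num) hs
  have hchoose : ∀ k, ((Nat.choose (2 ^ s * (2 * k + 2) - 1) (2 ^ s) : ℕ) : ZMod 2) = 1 := by
    intro k
    have := choose_pow_two_mul s (2 * k + 1) 1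
    rw [mul_one, Nat.choose_one_right] at this
    rw [show 2 * k + 2 = 2 * k + 1 + 1 by ring, this]
    push_cast
    rw [show (2 : ZMod 2) = 0 from rfl]
    simp
  rw [pow_succ] at hr
  generalize 2 ^ s = q at *
  obtain ⟨j, rfl⟩ : ∃ j, r = q * j + 1 :=
    ⟨r / q, by have := Nat.div_add_mod r q; omega⟩
  rcases Nat.even_or_odd' j with ⟨k, rfl | rfl⟩
  · refine absurd ?_ hr
    rw [← mul_assoc, Nat.mul_add_mod, Nat.mod_eq_of_lt (by omega)]
  rcases k with _ | k
  · simpa using h'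
  have key := hA (q + 1) (q * (4 * k + 5) + 2) (by nlinarith)
  rw [h', zero_mul, Finset.sum_eq_single (q * (2 * (k + 1) + 1) + 1)] at key
  · rw [show q * (2 * (k + 1) + 1) + 1 - (q + 1) - 1 = q * (2 * k + 2) - 1 by
        rw [show q * (2 * (k + 1) + 1) + 1 = q * (2 * k + 2) + (q + 1) by ring]; omega,
      show 2 * (q * (2 * (k + 1) + 1) + 1) - (q * (4 * k + 5) + 2) = q by
        rw [show 2 * (q * (2 * (k + 1) + 1) + 1) = q + (q * (4 * k + 5) + 2) by ring]; omega,
      show q * (4 * k + 5) + 2 + (q + 1) - (q * (2 * (k + 1) + 1) + 1)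
          = q * (2 * (k + 1) + 1) + 1 + 1 by
        rw [show q * (4 * k + 5) + 2 + (q + 1)
          = q * (2 * (k + 1) + 1) + 1 + 1 + (q * (2 * (k + 1) + 1) + 1) by ring]; omega,
      hchoose, E_self ε h0 h1, one_mul, mul_one] at key
    exact key.symm
  · intro i hi hne
    simp only [Finset.mem_filter, Finset.mem_Icc] at hi
    by_cases hiq : i % q ≠ 1
    · simp [h i hiq]
    rw [not_not] at hiq
    obtain ⟨l, rfl⟩ : ∃ l, i = q * l + 1 :=
      ⟨i / q, by have := Nat.div_add_mod i q; omega⟩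
    have hl : 2 * k + 3 ≤ l := by
      have : q * (4 * k + 5) ≤ q * (2 * l) := by linarith [hi.2]
      have := Nat.le_of_mul_le_mul_left this (by omega)
      omega
    have hl' : 2 * k + 4 ≤ l := by
      rcases hl.eq_or_lt with rfl | hlt
      · exact absurd (by ring) hne
      · exact hlt
    rw [E_eq_zero ε h0, mul_zero]
    have : q * (2 * k + 4) ≤ q * l := Nat.mul_le_mul_left q hl'
    have e : q * (4 * k + 5) + q + 2 * q = 2 * (q * (2 * k + 4)) := by ring
    omega
  · intro hn
    refine absurd ?_ hn
    simp only [Finset.mem_filter, Finset.mem_Icc]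
    have e1 : q * (2 * (k + 1) + 1) = q * k + q * k + 3 * q := by ring
    have e2 : q * (4 * k + 5) = 4 * (q * k) + 5 * q := by ring
    rw [e1, e2]
    omega
end

section
/- Let ε : ℕ → ZMod 2 satisfy the Adem constraints and let s ≥ 1. If ε(r) = 0 for every natural number r that is not congruent to 1 modulo 2^{s+1}, then ε(2^{s+1} + 1) = 0. -/
theorem E_eq_coeff (ε : ℕ → ZMod 2) (k d : ℕ) :
    E ε k d = PowerSeries.coeff d (PowerSeries.mk ε ^ k) := by
  have hpow : PowerSeries.mk ε ^ k = ∏ _j : Fin k, PowerSeries.mk ε := by simp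
  rw [hpow, PowerSeries.coeff_prod, E]
  refine Finset.sum_nbij' (fun f => Finsupp.equivFunOnFinite.symm f) (fun l => ⇑l) ?_ ?_ ?_ ?_ ?_
  · intro f hf
    simpa [Finset.mem_finsuppAntidiag, Finset.Nat.mem_antidiagonalTuple] using hf
  · intro l hl
    simpa [Finset.mem_finsuppAntidiag, Finset.Nat.mem_antidiagonalTuple] using hl
  · intro f _
    rfl
  · intro l _
    ext
    rfl
  · intro f _
    simp

/-- For `ε` supported on `1` modulo `q`, the generating function of `ε` is
`X + ε(q + 1) X ^ (q + 1) + O(X ^ (2 * q + 1))`. -/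
theorem exists_mk_eq (ε : ℕ → ZMod 2) (h1 : ε 1 = 1) (q : ℕ) (hq : 4 ≤ q)
    (h : ∀ r : ℕ, r % q ≠ 1 → ε r = 0) :
    ∃ K : PowerSeries (ZMod 2), PowerSeries.mk ε =
      PowerSeries.X + PowerSeries.X ^ (q + 1) *
        (PowerSeries.C (ε (q + 1)) + PowerSeries.X ^ q * K) := by
  have hdvd : (PowerSeries.X : PowerSeries (ZMod 2)) ^ (2 * q + 1) ∣
      PowerSeries.mk ε -
        (PowerSeries.X + PowerSeries.X ^ (q + 1) * PowerSeries.C (ε (q + 1))) := by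
    rw [PowerSeries.X_pow_dvd_iff]
    intro m hm
    rw [map_sub, map_add, PowerSeries.coeff_mk, PowerSeries.coeff_X, PowerSeries.coeff_mul_C,
      PowerSeries.coeff_X_pow]
    by_cases hm1 : m = 1
    · subst hm1
      simp [h1, show q ≠ 0 by omega]
    by_cases hmq : m = q + 1
    · subst hmq
      simp [show q ≠ 0 by omega]
    have hmod : m % q ≠ 1 := by
      intro hmod
      have hdecomp := Nat.div_add_mod m q
      have hlt : m / q < 3 := by
        rw [Nat.div_lt_iff_lt_mul (by omega)]
        omega
      generalize m / q = c at hdecomp hlt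
      interval_cases c <;> omega
    simp [h m hmod, hm1, hmq]
  obtain ⟨K, hK⟩ := hdvd
  refine ⟨K, ?_⟩
  rw [sub_eq_iff_eq_add] at hK
  rw [hK]
  ring

theorem E_eq_sq (ε : ℕ → ZMod 2) (h1 : ε 1 = 1) (n : ℕ) (hq : 4 ≤ 2 ^ n)
    (h : ∀ r : ℕ, r % 2 ^ n ≠ 1 → ε r = 0) :
    E ε (2 ^ n + 2) (3 * 2 ^ n + 2) = ε (2 ^ n + 1) ^ 2 := by
  have : CharP (PowerSeries (ZMod 2)) 2 :=
    charP_of_injective_ringHom (PowerSeries.C_injective (R := ZMod 2)) 2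
  obtain ⟨K, hK⟩ := exists_mk_eq ε h1 (2 ^ n) hq h
  have hFq : PowerSeries.mk ε ^ 2 ^ n = PowerSeries.X ^ 2 ^ n +
      (PowerSeries.X ^ (2 ^ n + 1) *
        (PowerSeries.C (ε (2 ^ n + 1)) + PowerSeries.X ^ 2 ^ n * K)) ^ 2 ^ n := by
    rw [hK, add_pow_char_pow]
  have hF2 : PowerSeries.mk ε ^ 2 = PowerSeries.X ^ 2 + (PowerSeries.X ^ (2 ^ n + 1)) ^ 2 *
      (PowerSeries.C (ε (2 ^ n + 1)) ^ 2 + (PowerSeries.X ^ 2 ^ n * K) ^ 2) := by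
    rw [hK, add_pow_char, mul_pow, add_pow_char]
  rw [E_eq_coeff, pow_add, hFq, hF2]
  generalize ε (2 ^ n + 1) = a
  generalize 2 ^ n = q at hq ⊢
  obtain ⟨t, rfl⟩ := Nat.exists_eq_add_of_le hq
  obtain ⟨R, hR⟩ : ∃ R : PowerSeries (ZMod 2),
      (PowerSeries.X ^ (4 + t) + (PowerSeries.X ^ (4 + t + 1) *
        (PowerSeries.C a + PowerSeries.X ^ (4 + t) * K)) ^ (4 + t)) *
      (PowerSeries.X ^ 2 + (PowerSeries.X ^ (4 + t + 1)) ^ 2 *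
        (PowerSeries.C a ^ 2 + (PowerSeries.X ^ (4 + t) * K) ^ 2)) =
      PowerSeries.X ^ (4 + t + 2) + PowerSeries.X ^ (3 * (4 + t) + 2) * PowerSeries.C (a ^ 2) +
        PowerSeries.X ^ (5 * (4 + t) + 2) * R := by
    generalize PowerSeries.C a + PowerSeries.X ^ (4 + t) * K = J
    refine ⟨K ^ 2 + PowerSeries.X ^ ((4 + t) * t) * J ^ (4 + t) *
      (1 + (PowerSeries.X ^ (4 + t)) ^ 2 *
        (PowerSeries.C a ^ 2 + (PowerSeries.X ^ (4 + t) * K) ^ 2)), ?_⟩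
    rw [map_pow, mul_pow _ J]
    generalize J ^ (4 + t) = L
    ring
  rw [hR, map_add, map_add, PowerSeries.coeff_X_pow, PowerSeries.coeff_mul_C,
    PowerSeries.coeff_X_pow, PowerSeries.coeff_X_pow_mul', if_neg (by omega), if_pos rfl,
    if_neg (by omega)]
  ring

theorem stmt_5 (ε : ℕ → ZMod 2) (hε : AdemConstraints ε) (s : ℕ) (hs : 1 ≤ s)
    (h : ∀ r : ℕ, r % 2 ^ (s + 1) ≠ 1 → ε r = 0) : ε (2 ^ (s + 1) + 1) = 0 := by
  obtain ⟨_, h1, hadem⟩ := hε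
  have hq : 4 ≤ 2 ^ (s + 1) := by
    calc 4 = 2 ^ 2 := by norm_num
      _ ≤ 2 ^ (s + 1) := Nat.pow_le_pow_right (by norm_num) (by omega)
  have hrel := hadem (2 ^ (s + 1) + 1) (3 * 2 ^ (s + 1) + 2) (by omega)
  rw [E_eq_sq ε h1 (s + 1) hq h, Finset.sum_eq_zero] at hrel
  · simpa using hrel
  · intro i hi
    simp only [Finset.mem_filter, Finset.mem_Icc] at hi
    have hmod : i % 2 ^ (s + 1) ≠ 1 := by
      intro hmod
      have hdecomp := Nat.div_add_mod i (2 ^ (s + 1))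
      have hlt : i / 2 ^ (s + 1) < 3 := by
        rw [Nat.div_lt_iff_lt_mul (by omega)]
        omega
      generalize i / 2 ^ (s + 1) = c at hdecomp hlt
      interval_cases c <;> omega
    simp [h i hmod]
end
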